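/- Fix κ ∈ [0,2]. For every N ≥ 1, all sequences p₁,…,p_N ∈ [0,1], g₁,…,g_N ∈ [0,1], and ω₁,…,ω_{N−1} ∈ {0,1}, define S_N(ω) = exp(κ·[Σ_{n=1}^{N−1}((pₙ−ωₙ)² − (gₙ−ωₙ)²) + ((p_N−ω)² − (g_N−ω)²)]) for ω ∈ {0,1}, and S_{N−1} = exp(κ·Σ_{n=1}^{N−1}((pₙ−ωₙ)² − (gₙ−ωₙ)²)). Then p_N·S_N(1) + (1−p_N)·S_N(0) ≤ S_{N−1}. -/

import Mathlib

open MeasureTheory ProbabilityTheory in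
/-- Hoeffding's lemma for a centred Bernoulli variable. -/
theorem bernoulli_hoeffding (p t : ℝ) (h0 : 0 ≤ p) (h1 : p ≤ 1) :
    p * Real.exp (t * (1 - p)) + (1 - p) * Real.exp (t * (-p)) ≤ Real.exp (t ^ 2 / 8) := by
  let μ : Measure ℝ := ENNReal.ofReal p • Measure.dirac (1 - p) +
    ENNReal.ofReal (1 - p) • Measure.dirac (-p)
  have hq : 0 ≤ 1 - p := by linarith
  have hμ : IsProbabilityMeasure μ := ⟨by
    simp only [μ, Measure.add_apply, Measure.smul_apply, measure_univ, smul_eq_mul, mul_one]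
    rw [← ENNReal.ofReal_add h0 hq]; simp⟩
  have hint : ∀ f : ℝ → ℝ, ∫ x, f x ∂μ = p * f (1 - p) + (1 - p) * f (-p) := by
    intro f
    have hi : ∀ a c : ℝ, Integrable f (ENNReal.ofReal c • Measure.dirac a) := fun a c =>
      (integrable_dirac (by simp)).smul_measure (by simp)
    rw [integral_add_measure (hi _ _) (hi _ _), integral_smul_measure, integral_smul_measure,
      integral_dirac, integral_dirac, ENNReal.toReal_ofReal h0, ENNReal.toReal_ofReal hq]
    simp
  have hb : ∀ᵐ x ∂μ, (fun x : ℝ => x) x ∈ Set.Icc (-p) (1 - p) := by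
    have hd : ∀ a c : ℝ, a ∈ Set.Icc (-p) (1 - p) →
        ∀ᵐ x ∂(ENNReal.ofReal c • Measure.dirac a), x ∈ Set.Icc (-p) (1 - p) := by
      intro a c ha
      apply Measure.ae_smul_measure
      rw [ae_dirac_eq]
      exact ha
    exact ae_add_measure_iff.2 ⟨hd _ _ ⟨by linarith, le_rfl⟩, hd _ _ ⟨le_rfl, by linarith⟩⟩
  have h := (hasSubgaussianMGF_of_mem_Icc_of_integral_eq_zero (μ := μ)
    (X := fun x : ℝ => x) measurable_id.aemeasurable hb (by rw [hint]; ring)).mgf_le t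
  rw [mgf, hint] at h
  refine h.trans (Real.exp_le_exp.2 (le_of_eq ?_))
  have : (1 - p - -p : ℝ) = 1 := by ring
  simp [this]
  ring


/-- Lemma 2 of the paper: the exponentiated cumulative quadratic-loss difference
process is a supermartingale, for any `κ ∈ [0,2]`.  Sequences are indexed from `0`,
so `p 0, …, p (N−1)` are the forecasts, `g 0, …, g (N−1)` the expert's predictions,
and `ω 0, …, ω (N−2)` the past outcomes. -/
theorem quadratic_supermartingale (κ : ℝ) (hκ : κ ∈ Set.Icc (0:ℝ) 2)
    (N : ℕ) (hN : 1 ≤ N) (p g : ℕ → ℝ)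
    (hp : ∀ n, p n ∈ Set.Icc (0:ℝ) 1) (hg : ∀ n, g n ∈ Set.Icc (0:ℝ) 1)
    (ω : ℕ → ℝ) (hω : ∀ n, ω n = 0 ∨ ω n = 1) :
    p (N - 1) *
        Real.exp (κ * ((∑ n ∈ Finset.range (N - 1),
            ((p n - ω n) ^ 2 - (g n - ω n) ^ 2)) +
          ((p (N - 1) - 1) ^ 2 - (g (N - 1) - 1) ^ 2))) +
      (1 - p (N - 1)) *
        Real.exp (κ * ((∑ n ∈ Finset.range (N - 1),
            ((p n - ω n) ^ 2 - (g n - ω n) ^ 2)) +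
          ((p (N - 1) - 0) ^ 2 - (g (N - 1) - 0) ^ 2))) ≤
    Real.exp (κ * ∑ n ∈ Finset.range (N - 1),
      ((p n - ω n) ^ 2 - (g n - ω n) ^ 2)) := by
  generalize (∑ n ∈ Finset.range (N - 1), ((p n - ω n) ^ 2 - (g n - ω n) ^ 2)) = s
  obtain ⟨hp0, hp1⟩ := hp (N - 1)
  generalize p (N - 1) = a at *
  generalize g (N - 1) = b at *
  obtain ⟨hk0, hk2⟩ := hκ
  have h := bernoulli_hoeffding a (2 * κ * (b - a)) hp0 hp1
  have h2 : Real.exp ((2 * κ * (b - a)) ^ 2 / 8) ≤ Real.exp (κ * (b - a) ^ 2) := by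
    apply Real.exp_le_exp.2
    nlinarith [mul_nonneg (mul_nonneg hk0 (sub_nonneg.2 hk2)) (sq_nonneg (b - a))]
  have h3 := mul_le_mul_of_nonneg_left (h.trans h2)
    (Real.exp_pos (κ * s - κ * (b - a) ^ 2)).le
  have e1 : κ * (s + ((a - 1) ^ 2 - (b - 1) ^ 2)) =
      (κ * s - κ * (b - a) ^ 2) + 2 * κ * (b - a) * (1 - a) := by ring
  have e0 : κ * (s + ((a - 0) ^ 2 - (b - 0) ^ 2)) =
      (κ * s - κ * (b - a) ^ 2) + 2 * κ * (b - a) * (-a) := by ring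
  rw [← Real.exp_add (κ * s - κ * (b - a) ^ 2) (κ * (b - a) ^ 2), sub_add_cancel] at h3
  rw [e1, e0, Real.exp_add, Real.exp_add]
  linarith
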